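/- Let R_X and R_Y be injective non-degenerate YBE solutions on sets X and Y, with structure groups G_X, G_Y, derived structure groups A_X, A_Y, and associated affine actions (Θ^X, b^X) and (Θ^Y, b^Y). Then R_X and R_Y are YB-isomorphic (there exists a bijection h : X → Y with R_Y ∘ (h × h) = (h × h) ∘ R_X) if and only if there exist a group isomorphism φ : G_X → G_Y with φ(ι_G(X)) = ι_G(Y) and a group isomorphism ψ : A_X → A_Y such that ψ(Θ^X(g)(a)) = Θ^Y(φ(g))(ψ(a)) and ψ(b^X(g)) = b^Y(φ(g)) for all g ∈ G_X and a ∈ A_X (i.e., the affine actions ρ^X and ρ^Y ∘ φ are conjugate via ψ). -/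

import Mathlib

/-- The map acting as `R` on the first two coordinates of `X × X × X` (i.e. `R × id_X`). -/
def Rfst {X : Type*} (R : X × X → X × X) : X × X × X → X × X × X :=
  fun p => ((R (p.1, p.2.1)).1, (R (p.1, p.2.1)).2, p.2.2)

/-- The map acting as `R` on the last two coordinates of `X × X × X` (i.e. `id_X × R`). -/
def Rsnd {X : Type*} (R : X × X → X × X) : X × X × X → X × X × X :=
  fun p => (p.1, R p.2)

/-- The braid relation `(R × id) ∘ (id × R) ∘ (R × id) = (id × R) ∘ (R × id) ∘ (id × R)`. -/
def IsBraided {X : Type*} (R : X × X → X × X) : Prop :=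
  Rfst R ∘ Rsnd R ∘ Rfst R = Rsnd R ∘ Rfst R ∘ Rsnd R

/-- The map `R(x, y) = (α_x(y), β_y(x))`. -/
def YBEform {X : Type*} (α β : X → X → X) : X × X → X × X :=
  fun p => (α p.1 p.2, β p.2 p.1)


/-- The defining relators of the structure group of `R(x,y) = (α_x(y), β_y(x))`:
`x * y = α_x(y) * β_y(x)`. -/
def ybRels {X : Type*} (α β : X → X → X) : Set (FreeGroup X) :=
  {r | ∃ x y : X, r = FreeGroup.of x * FreeGroup.of y *
        (FreeGroup.of (α x y) * FreeGroup.of (β y x))⁻¹}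

/-- The structure group `G_R` of the solution `R(x,y) = (α_x(y), β_y(x))`. -/
abbrev StructureGroup {X : Type*} (α β : X → X → X) : Type _ :=
  PresentedGroup (ybRels α β)

/-- The defining relators of the derived structure group of `R`:
`x * y = y * φ_R(x,y)` with `φ_R(x,y) = α_y(β_{α_x⁻¹(y)}(x))`. -/
def derivedRels {X : Type*} (α β αinv : X → X → X) : Set (FreeGroup X) :=
  {r | ∃ x y : X, r = FreeGroup.of x * FreeGroup.of y *
        (FreeGroup.of y * FreeGroup.of (α y (β (αinv x y) x)))⁻¹}

/-- The derived structure group `A_R` of the solution `R`. -/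
abbrev DerivedGroup {X : Type*} (α β αinv : X → X → X) : Type _ :=
  PresentedGroup (derivedRels α β αinv)

/-!
For a 1-cocycle `b` with respect to `Θ`, the map `g ↦ (b g, Θ g)` is a homomorphism into the
holomorph `A ⋊ Aut A`. Whether `ψ` conjugates two affine actions is therefore an equality of
homomorphisms, which can be checked on generators; for the structure groups this is what a YB
isomorphism `h` provides, as `h` carries one set of defining relators onto the other.

Conversely, since `φ` maps `ι_G(X)` onto `ι_G(Y)` it induces a bijection `h : X → Y`, and the
cocycles transport this from `φ` to `ψ`. Evaluating `Θ` on generators in `A` gives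
compatibility of `h` with `α`, and cancelling in the relation `x * y = α_x(y) * β_y(x)` in `G`
then gives compatibility with `β`.
-/

section AffineAction

variable {G A G' A' : Type*} [Group G] [Group A] [Group G'] [Group A']
  {Θ : G →* MulAut A} {b : G → A} {Θ' : G' →* MulAut A'} {b' : G' → A'}

/-- `b` is a 1-cocycle with respect to the action `Θ` of `G` on the possibly non-commutative
group `A`. -/
def IsOneCocycle (Θ : G →* MulAut A) (b : G → A) : Prop :=
  ∀ g h, b (g * h) = b g * Θ g (b h)

/-- The holomorph `A ⋊ Aut A`, whose element `(a, θ)` stands for the affine map `x ↦ a * θ x`. -/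
abbrev Holomorph (A : Type*) [Group A] : Type _ :=
  A ⋊[MonoidHom.id (MulAut A)] MulAut A

/-- Conjugation of affine maps by a group isomorphism. -/
def Holomorph.congr (ψ : A ≃* A') : Holomorph A ≃* Holomorph A' :=
  SemidirectProduct.congr ψ (MulAut.congr ψ) fun θ ↦ by ext; simp

/-- The affine action `g ↦ (a ↦ b g * Θ g a)` given by a 1-cocycle, as a homomorphism into the
holomorph. -/
def IsOneCocycle.affineHom (hb : IsOneCocycle Θ b) : G →* Holomorph A :=
  MonoidHom.mk' (fun g ↦ ⟨b g, Θ g⟩) fun g h ↦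
    SemidirectProduct.ext (hb g h) (map_mul Θ g h)

theorem IsOneCocycle.congr_affineHom_eq_iff (hb : IsOneCocycle Θ b) (hb' : IsOneCocycle Θ' b')
    (ψ : A ≃* A') (g : G) (g' : G') :
    Holomorph.congr ψ (hb.affineHom g) = hb'.affineHom g' ↔
      (∀ a, ψ (Θ g a) = Θ' g' (ψ a)) ∧ ψ (b g) = b' g' := by
  have conj_eq_iff : MulAut.congr ψ (Θ g) = Θ' g' ↔ ∀ a, ψ (Θ g a) = Θ' g' (ψ a) := by
    rw [MulEquiv.ext_iff, ψ.surjective.forall]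
    simp
  rw [SemidirectProduct.ext_iff, ← conj_eq_iff, and_comm]
  rfl

theorem IsOneCocycle.conj_affine_of_closure_eq_top (hb : IsOneCocycle Θ b)
    (hb' : IsOneCocycle Θ' b') (φ : G →* G') (ψ : A ≃* A') {S : Set G}
    (hS : Subgroup.closure S = ⊤) (hΘ : ∀ s ∈ S, ∀ a, ψ (Θ s a) = Θ' (φ s) (ψ a))
    (hbS : ∀ s ∈ S, ψ (b s) = b' (φ s)) :
    (∀ g a, ψ (Θ g a) = Θ' (φ g) (ψ a)) ∧ ∀ g, ψ (b g) = b' (φ g) := by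
  have affineHom_eq :
      (Holomorph.congr ψ).toMonoidHom.comp hb.affineHom = hb'.affineHom.comp φ :=
    MonoidHom.eq_of_eqOn_dense hS fun s hs ↦
      (hb.congr_affineHom_eq_iff hb' ψ s (φ s)).2 ⟨hΘ s hs, hbS s hs⟩
  rw [← forall_and]
  exact fun g ↦ (hb.congr_affineHom_eq_iff hb' ψ g (φ g)).1 (DFunLike.congr_fun affineHom_eq g)

end AffineAction

section Presentation

variable {X Y : Type*} {αX βX αXinv : X → X → X} {αY βY αYinv : Y → Y → Y}

open Function

/-- The isomorphism of presented groups induced by a bijection between the generators that carries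
one set of relators onto the other. -/
def presentedGroupCongr {r : Set (FreeGroup X)} {s : Set (FreeGroup Y)} (e : X ≃ Y)
    (hrs : FreeGroup.map e '' r = s) : PresentedGroup r ≃* PresentedGroup s :=
  QuotientGroup.congr _ _ (FreeGroup.freeGroupCongr e) <| by
    rw [← hrs]
    exact Subgroup.map_normalClosure _ _ (FreeGroup.freeGroupCongr e).surjective

theorem presentedGroupCongr_of {r : Set (FreeGroup X)} {s : Set (FreeGroup Y)} (e : X ≃ Y)
    (hrs : FreeGroup.map e '' r = s) (x : X) :
    presentedGroupCongr e hrs (.of x) = .of (e x) :=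
  rfl

theorem map_image_ybRels {h : X → Y} (hsurj : Surjective h) (hα : Semiconj₂ h αX αY)
    (hβ : Semiconj₂ h βX βY) :
    FreeGroup.map h '' ybRels αX βX = ybRels αY βY := by
  ext w
  simp only [ybRels, Set.mem_image, Set.mem_ofPred_eq, hsurj.exists, ← hα.eq, ← hβ.eq]
  constructor
  · rintro ⟨_, ⟨x, y, rfl⟩, rfl⟩
    exact ⟨x, y, by simp⟩
  · rintro ⟨x, y, rfl⟩
    exact ⟨_, ⟨x, y, rfl⟩, by simp⟩

theorem map_image_derivedRels {h : X → Y} (hsurj : Surjective h) (hα : Semiconj₂ h αX αY)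
    (hβ : Semiconj₂ h βX βY) (hαinv : Semiconj₂ h αXinv αYinv) :
    FreeGroup.map h '' derivedRels αX βX αXinv = derivedRels αY βY αYinv := by
  ext w
  simp only [derivedRels, Set.mem_image, Set.mem_ofPred_eq, hsurj.exists, ← hα.eq, ← hβ.eq,
    ← hαinv.eq]
  constructor
  · rintro ⟨_, ⟨x, y, rfl⟩, rfl⟩
    exact ⟨x, y, by simp⟩
  · rintro ⟨x, y, rfl⟩
    exact ⟨_, ⟨x, y, rfl⟩, by simp⟩

theorem StructureGroup.of_mul_of (α β : X → X → X) (x y : X) :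
    (.of x * .of y : StructureGroup α β) = .of (α x y) * .of (β y x) :=
  PresentedGroup.mk_eq_mk_of_mul_inv_mem ⟨x, y, rfl⟩

theorem YBEform_comp_map_eq_iff {h : X → Y} :
    YBEform αY βY ∘ Prod.map h h = Prod.map h h ∘ YBEform αX βX ↔
      Semiconj₂ h αX αY ∧ Semiconj₂ h βX βY := by
  simp only [funext_iff, Prod.forall, comp_apply, YBEform, Prod.map, Prod.mk.injEq, forall_and,
    Semiconj₂, eq_comm]
  exact and_congr_right fun _ ↦ forall_comm

end Presentation

theorem exists_equiv_of_range_eq {X Y Z : Type*} {u : X → Z} {v : Y → Z}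
    (hu : Function.Injective u) (hv : Function.Injective v) (huv : Set.range u = Set.range v) :
    ∃ e : X ≃ Y, ∀ x, u x = v (e x) :=
  ⟨(Equiv.ofInjective u hu).trans ((Equiv.setCongr huv).trans (Equiv.ofInjective v hv).symm),
    fun x ↦ (Equiv.apply_ofInjective_symm hv ⟨u x, huv ▸ Set.mem_range_self x⟩).symm⟩

section YangBaxter

variable {X Y : Type*} {αX βX αXinv : X → X → X} {αY βY αYinv : Y → Y → Y}
  {ΘX : StructureGroup αX βX →* MulAut (DerivedGroup αX βX αXinv)}
  {bX : StructureGroup αX βX → DerivedGroup αX βX αXinv}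
  {ΘY : StructureGroup αY βY →* MulAut (DerivedGroup αY βY αYinv)}
  {bY : StructureGroup αY βY → DerivedGroup αY βY αYinv}

open Function

/-- `(Θ, b)` is the affine action associated to `R(x, y) = (α_x(y), β_y(x))`. These conditions
determine `Θ` and `b`; bijectivity of `b` is not part of the definition. -/
structure IsYBAffineAction {α β αinv : X → X → X}
    (Θ : StructureGroup α β →* MulAut (DerivedGroup α β αinv))
    (b : StructureGroup α β → DerivedGroup α β αinv) : Prop where
  apply_of_of : ∀ x y, Θ (.of x) (.of y) = .of (α x y)
  cocycle_of : ∀ x, b (.of x) = .of x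
  isOneCocycle : IsOneCocycle Θ b

theorem IsYBAffineAction.conj_affine_of_semiconj₂ (hX : IsYBAffineAction ΘX bX)
    (hY : IsYBAffineAction ΘY bY) {h : X → Y} (hα : Semiconj₂ h αX αY)
    (φ : StructureGroup αX βX →* StructureGroup αY βY)
    (ψ : DerivedGroup αX βX αXinv ≃* DerivedGroup αY βY αYinv)
    (hφ : ∀ x, φ (.of x) = .of (h x)) (hψ : ∀ x, ψ (.of x) = .of (h x)) :
    (∀ g a, ψ (ΘX g a) = ΘY (φ g) (ψ a)) ∧ ∀ g, ψ (bX g) = bY (φ g) := by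
  refine hX.isOneCocycle.conj_affine_of_closure_eq_top hY.isOneCocycle φ ψ
    (PresentedGroup.closure_range_of _) (Set.forall_mem_range.2 fun x ↦ ?_)
    (Set.forall_mem_range.2 fun x ↦ ?_)
  · have hom_eq : ψ.toMonoidHom.comp (ΘX (.of x)).toMonoidHom =
        (ΘY (φ (.of x))).toMonoidHom.comp ψ.toMonoidHom :=
      PresentedGroup.ext fun y ↦ by simp [hφ, hψ, hX.apply_of_of, hY.apply_of_of, hα.eq]
    exact DFunLike.congr_fun hom_eq
  · rw [hX.cocycle_of, hψ, hφ, hY.cocycle_of]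

theorem IsYBAffineAction.derivedGroup_of_injective (hX : IsYBAffineAction ΘX bX)
    (hb : Injective bX) (hinj : Injective (PresentedGroup.of : X → StructureGroup αX βX)) :
    Injective (PresentedGroup.of : X → DerivedGroup αX βX αXinv) := by
  rw [← funext hX.cocycle_of]
  exact hb.comp hinj

theorem IsYBAffineAction.semiconj₂_of_equivariant (hX : IsYBAffineAction ΘX bX)
    (hY : IsYBAffineAction ΘY bY)
    (hinj : Injective (PresentedGroup.of : Y → DerivedGroup αY βY αYinv)) {h : X → Y}
    (φ : StructureGroup αX βX → StructureGroup αY βY)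
    (ψ : DerivedGroup αX βX αXinv → DerivedGroup αY βY αYinv)
    (hφ : ∀ x, φ (.of x) = .of (h x)) (hψ : ∀ x, ψ (.of x) = .of (h x))
    (hΘ : ∀ g a, ψ (ΘX g a) = ΘY (φ g) (ψ a)) :
    Semiconj₂ h αX αY := fun x y ↦ hinj <| by
  calc (.of (h (αX x y)) : DerivedGroup αY βY αYinv)
    _ = ψ (ΘX (.of x) (.of y)) := by rw [hX.apply_of_of, hψ]
    _ = ΘY (.of (h x)) (.of (h y)) := by rw [hΘ, hφ, hψ]
    _ = .of (αY (h x) (h y)) := hY.apply_of_of _ _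

theorem StructureGroup.semiconj₂_of_hom
    (hinj : Injective (PresentedGroup.of : Y → StructureGroup αY βY)) {h : X → Y}
    (hα : Semiconj₂ h αX αY) (φ : StructureGroup αX βX →* StructureGroup αY βY)
    (hφ : ∀ x, φ (.of x) = .of (h x)) :
    Semiconj₂ h βX βY := fun y x ↦ hinj <| by
  have map_relation := congrArg φ (StructureGroup.of_mul_of αX βX x y)
  simp only [map_mul, hφ, StructureGroup.of_mul_of αY βY (h x), hα.eq] at map_relation
  exact (mul_left_cancel map_relation).symm

theorem stmt14_general
    (hinvX : ∀ x, LeftInverse (αXinv x) (αX x) ∧ RightInverse (αXinv x) (αX x))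
    (hinjX : Injective fun x : X ↦ (PresentedGroup.of x : StructureGroup αX βX))
    (hinvY : ∀ y, LeftInverse (αYinv y) (αY y) ∧ RightInverse (αYinv y) (αY y))
    (hinjY : Injective fun y : Y ↦ (PresentedGroup.of y : StructureGroup αY βY))
    (hX : IsYBAffineAction ΘX bX) (hY : IsYBAffineAction ΘY bY) (hbY : Injective bY) :
    (∃ h : X → Y, Bijective h ∧
        YBEform αY βY ∘ Prod.map h h = Prod.map h h ∘ YBEform αX βX) ↔
    (∃ (φ : StructureGroup αX βX ≃* StructureGroup αY βY)
        (ψ : DerivedGroup αX βX αXinv ≃* DerivedGroup αY βY αYinv),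
        ⇑φ '' (Set.range fun x : X ↦ (PresentedGroup.of x : StructureGroup αX βX)) =
          (Set.range fun y : Y ↦ (PresentedGroup.of y : StructureGroup αY βY)) ∧
        (∀ (g : StructureGroup αX βX) (a : DerivedGroup αX βX αXinv),
          ψ (ΘX g a) = ΘY (φ g) (ψ a)) ∧
        (∀ g : StructureGroup αX βX, ψ (bX g) = bY (φ g))) := by
  simp only [YBEform_comp_map_eq_iff]
  constructor
  · rintro ⟨h, hbij, hα, hβ⟩
    have hαinv : Semiconj₂ h αXinv αYinv := fun x ↦
      Semiconj.inverses_right (hα x) (hinvX x).2 (hinvY (h x)).1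
    let e := Equiv.ofBijective h hbij
    let φ := presentedGroupCongr e (map_image_ybRels hbij.2 hα hβ)
    let ψ := presentedGroupCongr e (map_image_derivedRels hbij.2 hα hβ hαinv)
    refine ⟨φ, ψ, ?_, hX.conj_affine_of_semiconj₂ hY hα φ.toMonoidHom ψ
      (presentedGroupCongr_of e _) (presentedGroupCongr_of e _)⟩
    rw [← Set.range_comp]
    exact hbij.2.range_comp PresentedGroup.of
  · rintro ⟨φ, ψ, himage, hΘ, hb⟩
    obtain ⟨e, he⟩ := exists_equiv_of_range_eq (φ.injective.comp hinjX) hinjY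
      ((Set.range_comp _ _).trans himage)
    have hψ : ∀ x, ψ (.of x) = .of (e x) := fun x ↦ by
      rw [← hX.cocycle_of, hb, ← hY.cocycle_of]
      exact congrArg bY (he x)
    have hα : Semiconj₂ e αX αY := hX.semiconj₂_of_equivariant hY
      (hY.derivedGroup_of_injective hbY hinjY) φ ψ he hψ hΘ
    exact ⟨e, e.bijective, hα, StructureGroup.semiconj₂_of_hom hinjY hα φ.toMonoidHom he⟩

end YangBaxter

theorem stmt14 {X Y : Type*}
    (αX βX αXinv : X → X → X) (αY βY αYinv : Y → Y → Y)
    (hbijX : Function.Bijective (YBEform αX βX))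
    (hYBX : IsBraided (YBEform αX βX))
    (hαX : ∀ x, Function.Bijective (αX x)) (hβX : ∀ x, Function.Bijective (βX x))
    (hinvX : ∀ x, Function.LeftInverse (αXinv x) (αX x) ∧
      Function.RightInverse (αXinv x) (αX x))
    (hinjX : Function.Injective
      (fun x : X => (PresentedGroup.of x : StructureGroup αX βX)))
    (hbijY : Function.Bijective (YBEform αY βY))
    (hYBY : IsBraided (YBEform αY βY))
    (hαY : ∀ y, Function.Bijective (αY y)) (hβY : ∀ y, Function.Bijective (βY y))
    (hinvY : ∀ y, Function.LeftInverse (αYinv y) (αY y) ∧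
      Function.RightInverse (αYinv y) (αY y))
    (hinjY : Function.Injective
      (fun y : Y => (PresentedGroup.of y : StructureGroup αY βY)))
    (ΘX : StructureGroup αX βX →* MulAut (DerivedGroup αX βX αXinv))
    (hΘX : ∀ x y : X, ΘX (PresentedGroup.of x) (PresentedGroup.of y) =
      PresentedGroup.of (αX x y))
    (bX : StructureGroup αX βX → DerivedGroup αX βX αXinv)
    (hbX1 : ∀ x : X, bX (PresentedGroup.of x) = PresentedGroup.of x)
    (hbX2 : ∀ g h, bX (g * h) = bX g * ΘX g (bX h))
    (hbX3 : Function.Bijective bX)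
    (ΘY : StructureGroup αY βY →* MulAut (DerivedGroup αY βY αYinv))
    (hΘY : ∀ x y : Y, ΘY (PresentedGroup.of x) (PresentedGroup.of y) =
      PresentedGroup.of (αY x y))
    (bY : StructureGroup αY βY → DerivedGroup αY βY αYinv)
    (hbY1 : ∀ y : Y, bY (PresentedGroup.of y) = PresentedGroup.of y)
    (hbY2 : ∀ g h, bY (g * h) = bY g * ΘY g (bY h))
    (hbY3 : Function.Bijective bY) :
    (∃ h : X → Y, Function.Bijective h ∧
        YBEform αY βY ∘ Prod.map h h = Prod.map h h ∘ YBEform αX βX) ↔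
    (∃ (φ : StructureGroup αX βX ≃* StructureGroup αY βY)
        (ψ : DerivedGroup αX βX αXinv ≃* DerivedGroup αY βY αYinv),
        ⇑φ '' (Set.range fun x : X => (PresentedGroup.of x : StructureGroup αX βX)) =
          (Set.range fun y : Y => (PresentedGroup.of y : StructureGroup αY βY)) ∧
        (∀ (g : StructureGroup αX βX) (a : DerivedGroup αX βX αXinv),
          ψ (ΘX g a) = ΘY (φ g) (ψ a)) ∧
        (∀ g : StructureGroup αX βX, ψ (bX g) = bY (φ g))) :=
  stmt14_general hinvX hinjX hinvY hinjY ⟨hΘX, hbX1, hbX2⟩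
    ⟨hΘY, hbY1, hbY2⟩ hbY3.1
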